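/- For every complex number q with 0 < |q| < 1, the bilateral series identity ∑_{n=−∞}^{∞} n·q^{2n}/(1 − q^{3n+1}) = (q³;q³)_∞⁴ / ((q;q³)_∞² (q²;q³)_∞²) holds, where both sides converge (every denominator 1 − q^{3n+1} is nonzero since |q^{3n+1}| ≠ 1). -/

import Mathlib

/-- The infinite q-Pochhammer symbol `(a; q)_∞ = ∏_{n=0}^∞ (1 − a qⁿ)`. -/
noncomputable def qPochInf (a q : ℂ) : ℂ := ∏' n : ℕ, (1 - a * q ^ n)

/-!
Write `θ(x) = (x; q)_∞ (q/x; q)_∞`. The finite product `∏_{|j| ≤ N} (1 - a z q^j) / (1 - a q^j)` is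
a rational function of `a` with simple poles at powers of `q`; letting `N → ∞` in its partial
fraction expansion gives Kronecker's formula
`∑ₙ zⁿ / (1 - a qⁿ) = (q; q)_∞² θ(a z) / (θ(a) θ(z))` for `‖q‖ < ‖z‖ < 1`.
The operator `z d/dz` inserts the factor `n` on the left. At `z = q/a` the numerator `θ(a z)` has a
simple zero, so on the right only its derivative there, which is explicit, contributes. Replacing
`q` by `q³` and taking `a = q` gives the theorem.
-/

open Filter Finset Topology

section PartialFractions

variable {ι K : Type*} [DecidableEq ι] [Field K] {s : Finset ι}

theorem prod_sub_div_sub_eq_one_add_sum {v : ι → K} (hv : Set.InjOn v s) (y : ι → K) {x : K}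
    (hx : ∀ i ∈ s, x ≠ v i) :
    ∏ j ∈ s, (x - y j) / (x - v j) =
      1 + ∑ i ∈ s, (v i - y i) / (x - v i) * ∏ j ∈ s.erase i, (v i - y j) / (v i - v j) := by
  have degree_lt : (Lagrange.nodal s y - Lagrange.nodal s v).degree < #s := by
    rw [← Lagrange.degree_nodal (s := s) (v := y)]
    refine Polynomial.degree_sub_lt_left ?_ Lagrange.nodal_ne_zero ?_
    · rw [Lagrange.degree_nodal, Lagrange.degree_nodal]
    · rw [Lagrange.nodal_monic, Lagrange.nodal_monic]
  have interpolation := congrArg (Polynomial.eval x) <|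
    Lagrange.eq_interpolate_of_eval_eq (fun i ↦ ∏ j ∈ s, (v i - y j)) hv degree_lt fun i hi ↦ by
      rw [Polynomial.eval_sub, Lagrange.eval_nodal, Lagrange.eval_nodal_at_node hi, sub_zero]
  have denominator_ne_zero : ∏ j ∈ s, (x - v j) ≠ 0 :=
    prod_ne_zero_iff.2 fun i hi ↦ sub_ne_zero.2 (hx i hi)
  rw [Lagrange.eval_interpolate_not_at_node _ hx, Polynomial.eval_sub, Lagrange.eval_nodal,
    Lagrange.eval_nodal, sub_eq_iff_eq_add', ← mul_one_add] at interpolation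
  rw [prod_div_distrib, interpolation, mul_div_cancel_left₀ _ denominator_ne_zero]
  congr 1
  refine sum_congr rfl fun i hi ↦ ?_
  rw [Lagrange.nodalWeight, ← mul_prod_erase s _ hi, prod_div_distrib, prod_inv_distrib]
  ring

theorem prod_one_sub_mul_div_eq_pow_card_add_sum {u : ι → K} (hu : Set.InjOn u s)
    (hu₀ : ∀ i ∈ s, u i ≠ 0) {a z : K} (hz : z ≠ 0) (ha : ∀ i ∈ s, 1 - a * u i ≠ 0) :
    ∏ j ∈ s, (1 - a * z * u j) / (1 - a * u j) =
      z ^ #s + (1 - z) * ∑ i ∈ s, (1 - a * u i)⁻¹ *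
        ∏ j ∈ s.erase i, (u i - z * u j) / (u i - u j) := by
  have inv_injOn : Set.InjOn (fun i ↦ (u i)⁻¹) s := fun i hi j hj h ↦ hu hi hj (inv_injective h)
  have sub_inv_eq {i : ι} (hi : i ∈ s) : a - (u i)⁻¹ = -(1 - a * u i) / u i := by
    field [hu₀ i hi]
  have ha' : ∀ i ∈ s, a ≠ (u i)⁻¹ := fun i hi ↦ by
    rw [← sub_ne_zero, sub_inv_eq hi]
    exact div_ne_zero (neg_ne_zero.2 (ha i hi)) (hu₀ i hi)
  have factor_eq : ∀ j ∈ s, (1 - a * z * u j) / (1 - a * u j) =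
      z * ((a - (z * u j)⁻¹) / (a - (u j)⁻¹)) := fun j hj ↦ by
    rw [sub_inv_eq hj]
    field [hu₀ j hj, ha j hj]
  rw [prod_congr rfl factor_eq, prod_mul_distrib, prod_const,
    prod_sub_div_sub_eq_one_add_sum inv_injOn _ ha',
    mul_one_add, mul_sum, mul_sum]
  congr 1
  refine sum_congr rfl fun i hi ↦ ?_
  have factor_eq_of_ne : ∀ j ∈ s.erase i,
      ((u i)⁻¹ - (z * u j)⁻¹) / ((u i)⁻¹ - (u j)⁻¹) = z⁻¹ * ((u i - z * u j) / (u i - u j)) :=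
    fun j hj ↦ by
      obtain ⟨hji, hjs⟩ := mem_erase.1 hj
      have hij : u i - u j ≠ 0 := sub_ne_zero.2 fun h ↦ hji (hu hjs hi h.symm)
      have : (u i)⁻¹ - (u j)⁻¹ = -(u i - u j) / (u i * u j) := by field [hu₀ i hi, hu₀ j hjs]
      rw [this]
      field [hu₀ i hi, hu₀ j hjs]
  rw [sub_inv_eq hi, prod_congr rfl factor_eq_of_ne, prod_mul_distrib, prod_const,
    ← card_erase_add_one hi, inv_pow]
  field [hu₀ i hi, ha i hi]

end PartialFractions

theorem prod_Icc_erase_sub {M : Type*} [CommMonoid M] (f : ℤ → M) (c : ℤ) (m n : ℕ) :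
    ∏ j ∈ (Icc (c - n) (c + m)).erase c, f (j - c) =
      (∏ i ∈ range m, f (i + 1)) * ∏ i ∈ range n, f (-(i + 1)) := by
  have Icc_erase : (Icc (c - n) (c + m)).erase c =
      (range m).image (fun i : ℕ ↦ c + (i + 1)) ∪ (range n).image (fun i : ℕ ↦ c - (i + 1)) := by
    ext j
    simp only [mem_erase, mem_Icc, mem_union, mem_image, mem_range]
    constructor
    · rintro ⟨hne, hl, hu⟩
      rcases lt_or_gt_of_ne hne with h | h
      · exact .inr ⟨(c - j - 1).toNat, by omega, by omega⟩
      · exact .inl ⟨(j - c - 1).toNat, by omega, by omega⟩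
    · rintro (⟨i, hi, rfl⟩ | ⟨i, hi, rfl⟩) <;> omega
  rw [Icc_erase, prod_union, prod_image, prod_image]
  · simp
  · intro i _ j _ h; simpa using h
  · intro i _ j _ h; simpa using h
  · simp only [disjoint_left, mem_image, mem_range]; omega

theorem tendsto_sum_Icc_neg_mul {𝕜 : Type*} [NormedField 𝕜] [CompleteSpace 𝕜] {c : ℤ → 𝕜}
    (hc : Summable fun n ↦ ‖c n‖) {f g : ℕ → 𝕜} {x y : 𝕜} (hf : Tendsto f atTop (𝓝 x))
    (hg : Tendsto g atTop (𝓝 y)) :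
    Tendsto (fun N : ℕ ↦ ∑ n ∈ Icc (-N : ℤ) N, c n * (f (N - n).toNat * g (N + n).toNat)) atTop
      (𝓝 ((∑' n, c n) * (x * y))) := by
  obtain ⟨A, hA⟩ := (Metric.isBounded_range_of_tendsto f hf).exists_norm_le
  obtain ⟨B, hB⟩ := (Metric.isBounded_range_of_tendsto g hg).exists_norm_le
  rw [Set.forall_mem_range] at hA hB
  rw [← tsum_mul_right]
  refine Tendsto.congr (fun N ↦ (sum_eq_tsum_indicator _ _).symm) ?_
  refine tendsto_tsum_of_dominated_convergence (hc.mul_right (A * B)) (fun n ↦ ?_)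
    (.of_forall fun N n ↦ ?_)
  · have sub_atTop : Tendsto (fun N : ℕ ↦ (N - n).toNat) atTop atTop :=
      tendsto_atTop.2 fun b ↦ (eventually_ge_atTop (b + n.natAbs)).mono fun N hN ↦ by omega
    have add_atTop : Tendsto (fun N : ℕ ↦ (N + n).toNat) atTop atTop :=
      tendsto_atTop.2 fun b ↦ (eventually_ge_atTop (b + n.natAbs)).mono fun N hN ↦ by omega
    refine (((hf.comp sub_atTop).mul (hg.comp add_atTop)).const_mul (c n)).congr' ?_
    filter_upwards [eventually_ge_atTop n.natAbs] with N hN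
    rw [Set.indicator_of_mem (by rw [mem_coe, mem_Icc]; omega)]
    rfl
  · refine (norm_indicator_le_norm_self _ _).trans ?_
    have hA₀ : 0 ≤ A := (norm_nonneg _).trans (hA 0)
    rw [norm_mul, norm_mul]
    gcongr
    · exact hA _
    · exact hB _

theorem hasSum_mul_zpow_mul_deriv_tsum {c : ℤ → ℂ} {r R : ℝ} (hr₀ : 0 < r)
    (hr : Summable fun n ↦ ‖c n‖ * r ^ n) (hR : Summable fun n ↦ ‖c n‖ * R ^ n) {z : ℂ}
    (hrz : r < ‖z‖) (hzR : ‖z‖ < R) :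
    HasSum (fun n : ℤ ↦ n * (c n * z ^ n)) (z * deriv (fun w ↦ ∑' n, c n * w ^ n) z) := by
  let annulus : Set ℂ := {w | r < ‖w‖ ∧ ‖w‖ < R}
  have isOpen_annulus : IsOpen annulus :=
    (isOpen_lt continuous_const continuous_norm).inter (isOpen_lt continuous_norm continuous_const)
  have ne_zero {w : ℂ} (hw : w ∈ annulus) : w ≠ 0 := norm_pos_iff.1 (hr₀.trans hw.1)
  have zpow_le {w : ℂ} (hw : w ∈ annulus) (n : ℤ) : ‖w‖ ^ n ≤ r ^ n + R ^ n := by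
    have hw₀ : 0 < ‖w‖ := hr₀.trans hw.1
    rcases le_total 0 n with hn | hn
    · exact (zpow_le_zpow_left₀ hn hw₀.le hw.2.le).trans
        (le_add_of_nonneg_left (zpow_pos hr₀ n).le)
    · have inv_le := inv_anti₀ (zpow_pos hr₀ (-n))
        (zpow_le_zpow_left₀ (neg_nonneg.2 hn) hr₀.le hw.1.le)
      rw [zpow_neg, zpow_neg, inv_inv, inv_inv] at inv_le
      exact inv_le.trans
        (le_add_of_nonneg_right (zpow_pos (hw₀.trans hw.2) n).le)
  have hasSum_deriv := Complex.hasSum_deriv_of_summable_norm (F := fun n w ↦ c n * w ^ n)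
    (hr.add hR)
    (fun n w hw ↦ ((differentiableAt_zpow.2 (.inl (ne_zero hw))).const_mul _
      ).differentiableWithinAt)
    isOpen_annulus
    (fun n w hw ↦ by
      rw [norm_mul, norm_zpow, ← mul_add]
      exact mul_le_mul_of_nonneg_left (zpow_le hw n) (norm_nonneg _))
    (show z ∈ annulus from ⟨hrz, hzR⟩)
  refine (hasSum_deriv.mul_left z).congr_fun fun n ↦ ?_
  have hz₀ : z ≠ 0 := ne_zero ⟨hrz, hzR⟩
  rw [deriv_const_mul_field, deriv_zpow, zpow_sub_one₀ hz₀]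
  field

/-- The finite `q`-Pochhammer symbol `(a; q)_n = ∏_{i < n} (1 - a qⁱ)`, whose limit as `n → ∞` is
`qPochInf a q`. -/
noncomputable def qPoch (a q : ℂ) (n : ℕ) : ℂ := ∏ i ∈ range n, (1 - a * q ^ i)

/-- The multiplicative theta function `θ(x; q) = (x; q)_∞ (q/x; q)_∞`, whose zeros for
`0 < ‖q‖ < 1` are the integer powers of `q`. -/
noncomputable def qTheta (x q : ℂ) : ℂ := qPochInf x q * qPochInf (q / x) q

section QPochhammer

variable {q : ℂ}

theorem summable_norm_neg_mul_pow (hq : ‖q‖ < 1) (a : ℂ) :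
    Summable fun n : ℕ ↦ ‖-(a * q ^ n)‖ := by
  simp only [norm_neg, norm_mul, norm_pow]
  exact (summable_geometric_of_lt_one (norm_nonneg _) hq).mul_left _

theorem tendsto_qPoch (hq : ‖q‖ < 1) (a : ℂ) :
    Tendsto (fun n ↦ qPoch a q n) atTop (𝓝 (qPochInf a q)) := by
  simpa only [qPoch, qPochInf, ← sub_eq_add_neg] using
    (multipliable_one_add_of_summable (summable_norm_neg_mul_pow hq a)).tendsto_prod_tprod_nat

theorem qPochInf_ne_zero (hq : ‖q‖ < 1) {a : ℂ} (ha : ∀ n : ℕ, a * q ^ n ≠ 1) :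
    qPochInf a q ≠ 0 := by
  simpa only [qPochInf, ← sub_eq_add_neg] using tprod_one_add_ne_zero_of_summable
    (fun n ↦ by simpa only [← sub_eq_add_neg] using sub_ne_zero.2 (ha n).symm)
    (summable_norm_neg_mul_pow hq a)

theorem tendsto_qPoch_div_qPoch (hq : ‖q‖ < 1) (a : ℂ) {b : ℂ} (hb : ∀ n : ℕ, b * q ^ n ≠ 1) :
    Tendsto (fun n ↦ qPoch a q n / qPoch b q n) atTop (𝓝 (qPochInf a q / qPochInf b q)) :=
  (tendsto_qPoch hq a).div (tendsto_qPoch hq b) (qPochInf_ne_zero hq hb)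

theorem qPochInf_eq_one_sub_mul (hq : ‖q‖ < 1) (a : ℂ) :
    qPochInf a q = (1 - a) * qPochInf (q * a) q := by
  refine tendsto_nhds_unique ((tendsto_add_atTop_iff_nat 1).2 (tendsto_qPoch hq a))
    (((tendsto_qPoch hq (q * a)).const_mul (1 - a)).congr fun n ↦ ?_)
  rw [qPoch, qPoch, prod_range_succ', pow_zero, mul_one, mul_comm]
  congr 1
  exact prod_congr rfl fun i _ ↦ by ring

theorem differentiable_qPochInf (hq : ‖q‖ < 1) : Differentiable ℂ fun a ↦ qPochInf a q := by
  intro a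
  have hasProd := Summable.hasProdLocallyUniformlyOn_nat_one_add
    (K := Metric.ball (0 : ℂ) (‖a‖ + 1)) (f := fun n x ↦ -(x * q ^ n)) Metric.isOpen_ball
    ((summable_geometric_of_lt_one (norm_nonneg _) hq).mul_left (‖a‖ + 1))
    (.of_forall fun n x hx ↦ by
      rw [norm_neg, norm_mul, norm_pow]
      gcongr
      exact (mem_ball_zero_iff.1 hx).le)
    (fun n ↦ by fun_prop)
  have differentiableOn : DifferentiableOn ℂ (fun x ↦ qPochInf x q) (Metric.ball 0 (‖a‖ + 1)) := by
    simpa only [qPochInf, ← sub_eq_add_neg] using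
      hasProd.tendstoLocallyUniformlyOn_finsetRange.differentiableOn
        (.of_forall fun n ↦ by fun_prop) Metric.isOpen_ball
  exact differentiableOn.differentiableAt (Metric.isOpen_ball.mem_nhds (by simp))

theorem qTheta_eq_one_sub_mul (hq : ‖q‖ < 1) (x : ℂ) :
    qTheta x q = (1 - x) * (qPochInf (q * x) q * qPochInf (q / x) q) := by
  rw [qTheta, qPochInf_eq_one_sub_mul hq x, mul_assoc]

theorem qTheta_div (hq₀ : q ≠ 0) (x : ℂ) : qTheta (q / x) q = qTheta x q := by
  rw [qTheta, qTheta, div_div_cancel₀ hq₀, mul_comm]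

theorem div_mul_pow_ne_one {x : ℂ} (hx : ∀ n : ℤ, x * q ^ n ≠ 1) (n : ℕ) : q / x * q ^ n ≠ 1 := by
  intro h
  have hx₀ : x ≠ 0 := by rintro rfl; simp at h
  refine hx (-(n + 1 : ℕ)) ?_
  rw [div_mul_eq_mul_div, div_eq_one_iff_eq hx₀, ← pow_succ'] at h
  rw [zpow_neg, zpow_natCast, h, mul_inv_cancel₀ hx₀]

theorem qTheta_ne_zero (hq : ‖q‖ < 1) {x : ℂ} (hx : ∀ n : ℤ, x * q ^ n ≠ 1) : qTheta x q ≠ 0 :=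
  mul_ne_zero (qPochInf_ne_zero hq fun n ↦ mod_cast hx n)
    (qPochInf_ne_zero hq (div_mul_pow_ne_one hx))

theorem differentiableAt_qTheta (hq : ‖q‖ < 1) {x : ℂ} (hx : x ≠ 0) :
    DifferentiableAt ℂ (fun y ↦ qTheta y q) x :=
  (differentiable_qPochInf hq x).mul <|
    (differentiable_qPochInf hq (q / x)).comp x (by fun_prop (disch := assumption))

theorem hasDerivAt_qTheta_one (hq : ‖q‖ < 1) :
    HasDerivAt (fun x ↦ qTheta x q) (-qPochInf q q ^ 2) 1 := by
  have cofactor : DifferentiableAt ℂ (fun x ↦ qPochInf (q * x) q * qPochInf (q / x) q) 1 :=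
    ((differentiable_qPochInf hq _).comp 1 (by fun_prop)).mul
      ((differentiable_qPochInf hq _).comp 1 (by fun_prop (disch := exact one_ne_zero)))
  simp only [qTheta_eq_one_sub_mul hq]
  convert! ((hasDerivAt_id (1 : ℂ)).const_sub 1).mul cofactor.hasDerivAt using 1
  simp [sq]

theorem mul_zpow_ne_one_of_norm_lt {x : ℂ} (hqx : ‖q‖ < ‖x‖) (hx : ‖x‖ < 1) (n : ℤ) :
    x * q ^ n ≠ 1 := by
  intro h
  have hq : ‖q‖ ≤ 1 := (hqx.trans hx).le
  rcases n with n | n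
  · have norm_eq := congrArg norm h
    rw [Int.ofNat_eq_natCast, zpow_natCast, norm_mul, norm_pow, norm_one] at norm_eq
    have := mul_le_of_le_one_right (norm_nonneg x) (pow_le_one₀ (n := n) (norm_nonneg q) hq)
    linarith
  · rw [zpow_negSucc] at h
    have hq₀ : q ^ (n + 1) ≠ 0 := fun h₀ ↦ by simp [h₀] at h
    rw [mul_inv_eq_one₀ hq₀] at h
    rw [h, norm_pow] at hqx
    exact hqx.not_ge (pow_le_of_le_one (norm_nonneg q) hq n.succ_ne_zero)

end QPochhammer

section Kronecker

variable {q : ℂ}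

theorem prod_Icc_erase_one_sub_mul_zpow_div_eq_qPoch (hq₀ : q ≠ 0) {a z : ℂ} (ha : a ≠ 0)
    (hz : z ≠ 0) (c : ℤ) (m n : ℕ) :
    ∏ j ∈ (Icc (c - n) (c + m)).erase c, (1 - a * z * q ^ (j - c)) / (1 - a * q ^ (j - c)) =
      z ^ n * (qPoch (q * (a * z)) q m / qPoch (q * a) q m *
        (qPoch (q / (a * z)) q n / qPoch (q / a) q n)) := by
  have reflect (i : ℕ) : (1 - a * z * q ^ (-(i + 1) : ℤ)) / (1 - a * q ^ (-(i + 1) : ℤ)) =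
      z * ((1 - q / (a * z) * q ^ i) / (1 - q / a * q ^ i)) := by
    have one_sub_eq {b : ℂ} (hb : b ≠ 0) :
        1 - b * q ^ (-(i + 1) : ℤ) = -(b / q ^ (i + 1)) * (1 - q / b * q ^ i) := by
      rw [← Nat.cast_add_one, zpow_neg, zpow_natCast]
      field
    rw [one_sub_eq ha, one_sub_eq (mul_ne_zero ha hz), mul_div_mul_comm]
    congr 1
    field
  rw [prod_Icc_erase_sub (fun j ↦ (1 - a * z * q ^ j) / (1 - a * q ^ j)),
    prod_congr rfl fun i _ ↦ reflect i, prod_mul_distrib, prod_const, card_range]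
  simp only [qPoch, ← prod_div_distrib]
  rw [mul_left_comm]
  congr 2
  refine prod_congr rfl fun i _ ↦ ?_
  rw [← Nat.cast_add_one, zpow_natCast, pow_succ']
  ring

theorem prod_Icc_erase_zpow_sub_mul_zpow_div_eq_qPoch (hq₀ : q ≠ 0) {z : ℂ} (hz : z ≠ 0)
    {N : ℕ} {n : ℤ} (hn : n ∈ Icc (-N : ℤ) N) :
    ∏ j ∈ (Icc (-N : ℤ) N).erase n, (q ^ n - z * q ^ j) / (q ^ n - q ^ j) =
      z ^ N * z ^ n * (qPoch (q * z) q (N - n).toNat / qPoch q q (N - n).toNat *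
        (qPoch (q / z) q (N + n).toNat / qPoch q q (N + n).toNat)) := by
  rw [mem_Icc] at hn
  have centred := prod_Icc_erase_one_sub_mul_zpow_div_eq_qPoch hq₀ one_ne_zero hz n
    (N - n).toNat (N + n).toNat
  rw [Int.toNat_of_nonneg (by omega), Int.toNat_of_nonneg (by omega), sub_add_cancel_right,
    add_sub_cancel, ← zpow_natCast, Int.toNat_of_nonneg (by omega), zpow_add₀ hz,
    zpow_natCast] at centred
  simp only [one_mul, mul_one, div_one] at centred
  rw [← centred]
  refine prod_congr rfl fun j _ ↦ ?_
  have factor_out (b : ℂ) : q ^ n - b * q ^ j = q ^ n * (1 - b * q ^ (j - n)) := by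
    rw [zpow_sub₀ hq₀]
    field
  have denominator_eq := factor_out 1
  rw [one_mul, one_mul] at denominator_eq
  rw [factor_out, denominator_eq, mul_div_mul_left _ _ (zpow_ne_zero n hq₀)]

theorem zpow_injective_of_norm_lt_one (hq₀ : q ≠ 0) (hq : ‖q‖ < 1) :
    Function.Injective fun n : ℤ ↦ q ^ n := fun m n h ↦
  zpow_right_injective₀ (norm_pos_iff.2 hq₀) hq.ne (by simpa using congrArg norm h)

theorem one_sub_div_mul_qPoch_ratio_eq_pow_add_sum (hq₀ : q ≠ 0) (hq : ‖q‖ < 1) {a z : ℂ}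
    (ha₀ : a ≠ 0) (ha : ∀ n : ℤ, a * q ^ n ≠ 1) (hz : z ≠ 0) (N : ℕ) :
    (1 - a * z) / (1 - a) * (qPoch (q * (a * z)) q N / qPoch (q * a) q N *
        (qPoch (q / (a * z)) q N / qPoch (q / a) q N)) =
      z ^ (N + 1) + (1 - z) * ∑ n ∈ Icc (-N : ℤ) N, z ^ n / (1 - a * q ^ n) *
        (qPoch (q * z) q (N - n).toNat / qPoch q q (N - n).toNat *
          (qPoch (q / z) q (N + n).toNat / qPoch q q (N + n).toNat)) := by
  have partial_fractions := prod_one_sub_mul_div_eq_pow_card_add_sum (s := Icc (-N : ℤ) N)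
    (zpow_injective_of_norm_lt_one hq₀ hq).injOn (fun n _ ↦ zpow_ne_zero n hq₀) hz
    (fun n _ ↦ sub_ne_zero.2 (ha n).symm)
  have lhs_eq : ∏ j ∈ Icc (-N : ℤ) N, (1 - a * z * q ^ j) / (1 - a * q ^ j) =
      z ^ N * ((1 - a * z) / (1 - a) * (qPoch (q * (a * z)) q N / qPoch (q * a) q N *
        (qPoch (q / (a * z)) q N / qPoch (q / a) q N))) := by
    have erase_zero := prod_Icc_erase_one_sub_mul_zpow_div_eq_qPoch hq₀ ha₀ hz 0 N N
    simp only [zero_sub, zero_add, sub_zero] at erase_zero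
    rw [← mul_prod_erase _ _ (show (0 : ℤ) ∈ Icc (-N : ℤ) N by simp), erase_zero, zpow_zero,
      mul_one, mul_one, mul_left_comm]
  rw [lhs_eq, Int.card_Icc, show (N + 1 - -N : ℤ).toNat = N + (N + 1) by omega,
    pow_add] at partial_fractions
  refine mul_left_cancel₀ (pow_ne_zero N hz) (partial_fractions.trans ?_)
  rw [mul_add, mul_left_comm, mul_sum _ _ (z ^ N)]
  congr 2
  refine sum_congr rfl fun n hn ↦ ?_
  rw [prod_Icc_erase_zpow_sub_mul_zpow_div_eq_qPoch hq₀ hz hn]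
  ring

theorem summable_norm_inv_one_sub_mul_zpow (hq₀ : q ≠ 0) {a : ℂ} (ha₀ : a ≠ 0) {r : ℝ}
    (hqr : ‖q‖ < r) (hr : r < 1) :
    Summable fun n : ℤ ↦ ‖(1 - a * q ^ n)⁻¹‖ * r ^ n := by
  have hr₀ : 0 < r := (norm_nonneg q).trans_lt hqr
  have pow_tendsto : Tendsto (fun n : ℕ ↦ q ^ n) atTop (𝓝 0) :=
    tendsto_pow_atTop_nhds_zero_of_norm_lt_one (hqr.trans hr)
  refine .of_nat_of_neg ?_ ?_
  · have inv_tendsto : Tendsto (fun n : ℕ ↦ (1 - a * q ^ n)⁻¹) atTop (𝓝 (1 - a * 0)⁻¹) :=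
      (tendsto_const_nhds.sub (pow_tendsto.const_mul a)).inv₀ (by simp)
    refine summable_of_isBigO_nat (summable_geometric_of_lt_one hr₀.le hr) ?_
    simpa using (inv_tendsto.norm.isBigO_one ℝ).mul (Asymptotics.isBigO_refl (r ^ ·) atTop)
  · have inv_tendsto : Tendsto (fun n : ℕ ↦ (q ^ n - a)⁻¹) atTop (𝓝 (0 - a)⁻¹) :=
      (pow_tendsto.sub_const a).inv₀ (by simpa using ha₀)
    have term_eq (n : ℕ) : ‖(1 - a * q ^ (-n : ℤ))⁻¹‖ * r ^ (-n : ℤ) =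
        ‖(q ^ n - a)⁻¹‖ * (‖q‖ / r) ^ n := by
      have : 1 - a * q ^ (-n : ℤ) = (q ^ n - a) / q ^ n := by
        rw [zpow_neg, zpow_natCast]
        field
      rw [this, inv_div, norm_div, norm_pow, norm_inv, zpow_neg, zpow_natCast, div_pow]
      field
    simp only [term_eq]
    refine summable_of_isBigO_nat
      (summable_geometric_of_lt_one (by positivity) ((div_lt_one hr₀).2 hqr)) ?_
    simpa using (inv_tendsto.norm.isBigO_one ℝ).mul
      (Asymptotics.isBigO_refl ((‖q‖ / r) ^ ·) atTop)

theorem self_mul_pow_ne_one (hq : ‖q‖ < 1) (n : ℕ) : q * q ^ n ≠ 1 := fun h ↦ by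
  rw [← pow_succ'] at h
  exact (pow_lt_one₀ (norm_nonneg q) hq n.succ_ne_zero).ne (by rw [← norm_pow, h, norm_one])

theorem qTheta_mul_div_qTheta_eq_tsum_mul (hq₀ : q ≠ 0) {a z : ℂ} (ha₀ : a ≠ 0)
    (ha : ∀ n : ℤ, a * q ^ n ≠ 1) (hqz : ‖q‖ < ‖z‖) (hz : ‖z‖ < 1) :
    qTheta (a * z) q / qTheta a q =
      (∑' n : ℤ, (1 - a * q ^ n)⁻¹ * z ^ n) * (qTheta z q / qPochInf q q ^ 2) := by
  have hq : ‖q‖ < 1 := hqz.trans hz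
  have hz₀ : z ≠ 0 := norm_pos_iff.1 ((norm_nonneg q).trans_lt hqz)
  have mul_self_mul_pow_ne_one (n : ℕ) : q * a * q ^ n ≠ 1 := by
    rw [mul_comm q a, mul_assoc, ← pow_succ']
    exact_mod_cast ha (n + 1 : ℕ)
  have summable_norm : Summable fun n : ℤ ↦ ‖z ^ n / (1 - a * q ^ n)‖ := by
    simpa [div_eq_inv_mul] using summable_norm_inv_one_sub_mul_zpow hq₀ ha₀ hqz hz
  have lhs_tendsto := ((tendsto_qPoch_div_qPoch hq (q * (a * z)) mul_self_mul_pow_ne_one).mul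
    (tendsto_qPoch_div_qPoch hq (q / (a * z)) (div_mul_pow_ne_one ha))).const_mul
      ((1 - a * z) / (1 - a))
  have rhs_tendsto := ((tendsto_pow_atTop_nhds_zero_of_norm_lt_one hz).comp
    (tendsto_add_atTop_nat 1)).add ((tendsto_sum_Icc_neg_mul summable_norm
      (tendsto_qPoch_div_qPoch hq (q * z) (self_mul_pow_ne_one hq))
      (tendsto_qPoch_div_qPoch hq (q / z) (self_mul_pow_ne_one hq))).const_mul (1 - z))
  have limit_eq := tendsto_nhds_unique lhs_tendsto <|
    rhs_tendsto.congr fun N ↦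
      (one_sub_div_mul_qPoch_ratio_eq_pow_add_sum hq₀ hq ha₀ ha hz₀ N).symm
  simp only [qTheta_eq_one_sub_mul hq, ← div_eq_inv_mul]
  rw [mul_div_mul_comm, mul_div_mul_comm, limit_eq]
  ring

theorem tsum_inv_one_sub_mul_zpow_eq_qTheta (hq₀ : q ≠ 0) {a z : ℂ} (ha₀ : a ≠ 0)
    (ha : ∀ n : ℤ, a * q ^ n ≠ 1) (hqz : ‖q‖ < ‖z‖) (hz : ‖z‖ < 1) :
    ∑' n : ℤ, (1 - a * q ^ n)⁻¹ * z ^ n =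
      qPochInf q q ^ 2 * qTheta (a * z) q / (qTheta a q * qTheta z q) := by
  have hq : ‖q‖ < 1 := hqz.trans hz
  have theta_ne_zero : qTheta z q ≠ 0 := qTheta_ne_zero hq (mul_zpow_ne_one_of_norm_lt hqz hz)
  have qPochInf_self_ne_zero : qPochInf q q ≠ 0 := qPochInf_ne_zero hq (self_mul_pow_ne_one hq)
  rw [mul_comm (qTheta a q), mul_div_mul_comm, qTheta_mul_div_qTheta_eq_tsum_mul hq₀ ha₀ ha hqz hz]
  field

theorem norm_lt_norm_div (hq₀ : q ≠ 0) {a : ℂ} (ha₀ : a ≠ 0) (ha : ‖a‖ < 1) :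
    ‖q‖ < ‖q / a‖ := by
  rw [norm_div, lt_div_iff₀ (norm_pos_iff.2 ha₀)]
  exact mul_lt_of_lt_one_right (norm_pos_iff.2 hq₀) ha

theorem norm_div_lt_one {a : ℂ} (hqa : ‖q‖ < ‖a‖) : ‖q / a‖ < 1 := by
  rw [norm_div]
  exact (div_lt_one ((norm_nonneg q).trans_lt hqa)).2 hqa

theorem hasDerivAt_tsum_inv_one_sub_mul_zpow (hq₀ : q ≠ 0) {a : ℂ} (hqa : ‖q‖ < ‖a‖)
    (ha : ‖a‖ < 1) :
    HasDerivAt (fun z ↦ ∑' n : ℤ, (1 - a * q ^ n)⁻¹ * z ^ n)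
      (qPochInf q q ^ 4 / qTheta a q ^ 2 / (q / a)) (q / a) := by
  have hq : ‖q‖ < 1 := hqa.trans ha
  have ha₀ : a ≠ 0 := norm_pos_iff.1 ((norm_nonneg q).trans_lt hqa)
  have hz₀ : q / a ≠ 0 := div_ne_zero hq₀ ha₀
  have theta_ne_zero : qTheta a q ≠ 0 := qTheta_ne_zero hq (mul_zpow_ne_one_of_norm_lt hqa ha)
  have theta_one : qTheta 1 q = 0 := by rw [qTheta_eq_one_sub_mul hq, sub_self, zero_mul]
  have kronecker : ∀ᶠ z in 𝓝 (q / a), ∑' n : ℤ, (1 - a * q ^ n)⁻¹ * z ^ n =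
      qPochInf q q ^ 2 * qTheta (q / a / z) q / (qTheta a q * qTheta z q) := by
    filter_upwards [continuous_norm.continuousAt.eventually_const_lt (norm_lt_norm_div hq₀ ha₀ ha),
      continuous_norm.continuousAt.eventually_lt_const (norm_div_lt_one hqa)] with z hqz hz
    rw [tsum_inv_one_sub_mul_zpow_eq_qTheta hq₀ ha₀ (mul_zpow_ne_one_of_norm_lt hqa ha) hqz hz,
      div_div, qTheta_div hq₀]
  have numerator : HasDerivAt (fun z ↦ qTheta (q / a / z) q) (qPochInf q q ^ 2 / (q / a))
      (q / a) := by
    have inner := (hasDerivAt_inv hz₀).const_mul (q / a)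
    simp only [← div_eq_mul_inv] at inner
    have outer := hasDerivAt_qTheta_one hq
    rw [← div_self hz₀] at outer
    convert! outer.comp (q / a) inner using 1
    field
  have quotient := (numerator.const_mul (qPochInf q q ^ 2)).div
    ((differentiableAt_qTheta hq hz₀).hasDerivAt.const_mul (qTheta a q))
    (by rw [qTheta_div hq₀]; exact mul_ne_zero theta_ne_zero theta_ne_zero)
  refine (quotient.congr_of_eventuallyEq kronecker).congr_deriv ?_
  rw [div_self hz₀, theta_one, qTheta_div hq₀]
  field

end Kronecker

theorem bilateral_sum_A3_general {q a : ℂ} (hq₀ : q ≠ 0) (hqa : ‖q‖ < ‖a‖) (ha : ‖a‖ < 1) :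
    HasSum (fun n : ℤ ↦ n * (q / a) ^ n / (1 - a * q ^ n))
      (qPochInf q q ^ 4 / (qPochInf a q ^ 2 * qPochInf (q / a) q ^ 2)) := by
  have ha₀ : a ≠ 0 := norm_pos_iff.1 ((norm_nonneg q).trans_lt hqa)
  have hqz : ‖q‖ < ‖q / a‖ := norm_lt_norm_div hq₀ ha₀ ha
  have hz : ‖q / a‖ < 1 := norm_div_lt_one hqa
  obtain ⟨r, hqr, hrz⟩ := exists_between hqz
  obtain ⟨R, hzR, hR⟩ := exists_between hz
  have hasSum := hasSum_mul_zpow_mul_deriv_tsum ((norm_nonneg q).trans_lt hqr)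
    (summable_norm_inv_one_sub_mul_zpow hq₀ ha₀ hqr (hrz.trans hz))
    (summable_norm_inv_one_sub_mul_zpow hq₀ ha₀ (hqz.trans hzR) hR) hrz hzR
  rw [(hasDerivAt_tsum_inv_one_sub_mul_zpow hq₀ hqa ha).deriv,
    mul_div_cancel₀ _ (div_ne_zero hq₀ ha₀), qTheta, mul_pow] at hasSum
  exact hasSum.congr_fun fun n ↦ by ring

/-- For 0 < |q| < 1, the bilateral series ∑_{n∈ℤ} n·q²ⁿ/(1 − q^{3n+1}) converges and equals
(q³;q³)⁴_∞ / ((q;q³)²_∞ (q²;q³)²_∞). -/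
theorem bilateral_sum_A3 (q : ℂ) (h0 : 0 < ‖q‖) (h1 : ‖q‖ < 1) :
    Summable (fun n : ℤ => (n : ℂ) * q ^ (2 * n) / (1 - q ^ (3 * n + 1))) ∧
    ∑' n : ℤ, (n : ℂ) * q ^ (2 * n) / (1 - q ^ (3 * n + 1)) =
      qPochInf (q ^ 3) (q ^ 3) ^ 4 /
        (qPochInf q (q ^ 3) ^ 2 * qPochInf (q ^ 2) (q ^ 3) ^ 2) := by
  have hq₀ : q ≠ 0 := norm_pos_iff.1 h0
  have norm_cube_lt : ‖q ^ 3‖ < ‖q‖ := by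
    rw [norm_pow]
    exact pow_lt_self_of_lt_one₀ h0 h1 (by norm_num)
  have div_eq_sq : q ^ 3 / q = q ^ 2 := by field
  have hasSum := bilateral_sum_A3_general (pow_ne_zero 3 hq₀) norm_cube_lt h1
  have term_eq (n : ℤ) : (n : ℂ) * (q ^ 3 / q) ^ n / (1 - q * (q ^ 3) ^ n) =
      n * q ^ (2 * n) / (1 - q ^ (3 * n + 1)) := by
    rw [div_eq_sq, zpow_mul, zpow_add_one₀ hq₀, zpow_mul, mul_comm q]
    norm_cast
  simp only [term_eq] at hasSum
  rw [div_eq_sq] at hasSum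
  exact ⟨hasSum.summable, hasSum.tsum_eq⟩
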